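/- Let Ω ⊆ ℍ ≅ ℂ² be open, θ ∈ [0,2π), α, β ∈ ℂ, and set u := α + (ie^{iθ}j)β ∈ ℍ. For every C¹ function g : Ω → ℂ (viewed as ℍ-valued) one has the identity ${}^θ𝒟_{r,u}[g] = \big(∂g/∂z̄₁ + α g\big) + (ie^{iθ}j)\big(∂\bar g/∂z̄₂ + β \bar g\big)$; consequently ${}^θ𝒟_{r,u}[g] = 0$ on Ω if and only if ∂g/∂z̄₁ = −α g and ∂g/∂z₂ = −β̄ g on Ω. -/

import Mathlib

open MeasureTheory

noncomputable section

/-- The real quaternions `ℍ`. -/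
abbrev H4 : Type := Quaternion ℝ

instance : MeasurableSpace H4 := borel _
instance : BorelSpace H4 := ⟨rfl⟩

/-- The quaternion unit `i`. -/
def qI : H4 := ⟨0, 1, 0, 0⟩
/-- The quaternion unit `j`. -/
def qJ : H4 := ⟨0, 0, 1, 0⟩
/-- `e^{iθ} = cos θ + (sin θ) i` as a quaternion. -/
def eIθ (θ : ℝ) : H4 := ⟨Real.cos θ, Real.sin θ, 0, 0⟩
/-- The basis direction `i e^{iθ} j`. -/
def e2 (θ : ℝ) : H4 := qI * eIθ θ * qJ
/-- The basis direction `e^{iθ} j`. -/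
def e3 (θ : ℝ) : H4 := eIθ θ * qJ

/-- Third θ-coordinate of a quaternion `z = x₀ + x₁ i + x₂ (i e^{iθ} j) + x₃ (e^{iθ} j)`. -/
def x2θ (θ : ℝ) (z : H4) : ℝ := -z.imJ * Real.sin θ + z.imK * Real.cos θ
/-- Fourth θ-coordinate of a quaternion. -/
def x3θ (θ : ℝ) (z : H4) : ℝ := z.imJ * Real.cos θ + z.imK * Real.sin θ

/-- The θ-inner product `⟨u,z⟩_θ`: the dot product of θ-coordinates. -/
def innerθ (θ : ℝ) (u z : H4) : ℝ :=
  u.re * z.re + u.imI * z.imI + x2θ θ u * x2θ θ z + x3θ θ u * x3θ θ z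

/-- Left θ-Cauchy–Riemann operator
`{}^θ𝒟 f = ∂f/∂x₀ + i ∂f/∂x₁ + (i e^{iθ} j) ∂f/∂x₂ + (e^{iθ} j) ∂f/∂x₃`. -/
def Dl (θ : ℝ) (f : H4 → H4) (z : H4) : H4 :=
  fderiv ℝ f z 1 + qI * fderiv ℝ f z qI + e2 θ * fderiv ℝ f z (e2 θ) +
    e3 θ * fderiv ℝ f z (e3 θ)

/-- Left (θ,u)-Cauchy–Riemann operator `{}^θ_u𝒟 f = {}^θ𝒟 f + u f`. -/
def Dlu (θ : ℝ) (u : H4) (f : H4 → H4) (z : H4) : H4 := Dl θ f z + u * f z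

/-- Right θ-Cauchy–Riemann operator. -/
def Dr (θ : ℝ) (f : H4 → H4) (z : H4) : H4 :=
  fderiv ℝ f z 1 + fderiv ℝ f z qI * qI + fderiv ℝ f z (e2 θ) * e2 θ +
    fderiv ℝ f z (e3 θ) * e3 θ

/-- Right (θ,u)-Cauchy–Riemann operator `{}^θ𝒟_{r,u} f = {}^θ𝒟_r f + f u`. -/
def Dru (θ : ℝ) (u : H4) (f : H4 → H4) (z : H4) : H4 := Dr θ f z + f z * u

/-- Embedding of ℂ into the quaternions, `ℂ ≅ ℝ + ℝi ⊂ ℍ`. -/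
def toH (a : ℂ) : H4 := ⟨a.re, a.im, 0, 0⟩

/-- First complex θ-component of a quaternion: `z₁ = x₀ + x₁ i`. -/
def c1 (z : H4) : ℂ := ⟨z.re, z.imI⟩
/-- Second complex θ-component of a quaternion: `z₂ = x₂ + x₃ i`. -/
def c2 (θ : ℝ) (z : H4) : ℂ := ⟨x2θ θ z, x3θ θ z⟩

/-- Wirtinger operator `∂/∂z̄₁ = ∂/∂x₀ + i ∂/∂x₁` on ℂ-valued functions. -/
def db1 (f : H4 → ℂ) (z : H4) : ℂ := fderiv ℝ f z 1 + Complex.I * fderiv ℝ f z qI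
/-- Wirtinger operator `∂/∂z̄₂ = ∂/∂x₂ + i ∂/∂x₃` on ℂ-valued functions. -/
def db2 (θ : ℝ) (f : H4 → ℂ) (z : H4) : ℂ :=
  fderiv ℝ f z (e2 θ) + Complex.I * fderiv ℝ f z (e3 θ)
/-- Wirtinger operator `∂/∂z₂ = ∂/∂x₂ − i ∂/∂x₃` on ℂ-valued functions. -/
def dz2 (θ : ℝ) (f : H4 → ℂ) (z : H4) : ℂ :=
  fderiv ℝ f z (e2 θ) - Complex.I * fderiv ℝ f z (e3 θ)

/-- `e^{iθ}` as a complex number. -/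
def cexpI (θ : ℝ) : ℂ := ⟨Real.cos θ, Real.sin θ⟩

@[simp] lemma zeroH_re : (0 : H4).re = 0 := rfl
@[simp] lemma zeroH_imI : (0 : H4).imI = 0 := rfl
@[simp] lemma zeroH_imJ : (0 : H4).imJ = 0 := rfl
@[simp] lemma zeroH_imK : (0 : H4).imK = 0 := rfl
@[simp] lemma toH_re (a : ℂ) : (toH a).re = a.re := rfl
@[simp] lemma toH_imI (a : ℂ) : (toH a).imI = a.im := rfl
@[simp] lemma toH_imJ (a : ℂ) : (toH a).imJ = 0 := rfl
@[simp] lemma toH_imK (a : ℂ) : (toH a).imK = 0 := rfl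
@[simp] lemma qI_re  : qI.re = 0 := rfl
@[simp] lemma qI_imI  : qI.imI = 1 := rfl
@[simp] lemma qI_imJ  : qI.imJ = 0 := rfl
@[simp] lemma qI_imK  : qI.imK = 0 := rfl
@[simp] lemma qJ_re  : qJ.re = 0 := rfl
@[simp] lemma qJ_imI  : qJ.imI = 0 := rfl
@[simp] lemma qJ_imJ  : qJ.imJ = 1 := rfl
@[simp] lemma qJ_imK  : qJ.imK = 0 := rfl
@[simp] lemma eIθ_re (θ : ℝ) : (eIθ θ).re = Real.cos θ := rfl
@[simp] lemma eIθ_imI (θ : ℝ) : (eIθ θ).imI = Real.sin θ := rfl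
@[simp] lemma eIθ_imJ (θ : ℝ) : (eIθ θ).imJ = 0 := rfl
@[simp] lemma eIθ_imK (θ : ℝ) : (eIθ θ).imK = 0 := rfl

@[simp] lemma e2_re (θ : ℝ) : (e2 θ).re = 0 := by simp [e2]
@[simp] lemma e2_imI (θ : ℝ) : (e2 θ).imI = 0 := by simp [e2]
@[simp] lemma e2_imJ (θ : ℝ) : (e2 θ).imJ = -Real.sin θ := by simp [e2]
@[simp] lemma e2_imK (θ : ℝ) : (e2 θ).imK = Real.cos θ := by simp [e2]
@[simp] lemma e3_re (θ : ℝ) : (e3 θ).re = 0 := by simp [e3]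
@[simp] lemma e3_imI (θ : ℝ) : (e3 θ).imI = 0 := by simp [e3]
@[simp] lemma e3_imJ (θ : ℝ) : (e3 θ).imJ = Real.cos θ := by simp [e3]
@[simp] lemma e3_imK (θ : ℝ) : (e3 θ).imK = Real.sin θ := by simp [e3]

/-- The embedding `toH` as a real-linear map. -/
def toHLin : ℂ →ₗ[ℝ] H4 where
  toFun := toH
  map_add' a b := by ext <;> simp
  map_smul' r a := by ext <;> simp

lemma fderiv_toH (g : H4 → ℂ) (z v : H4) (hg : DifferentiableAt ℝ g z) :
    fderiv ℝ (fun w => toH (g w)) z v = toH (fderiv ℝ g z v) := by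
  have h := (LinearMap.toContinuousLinearMap toHLin).hasFDerivAt.comp z hg.hasFDerivAt
  have h2 : HasFDerivAt (fun w => toH (g w))
    ((LinearMap.toContinuousLinearMap toHLin).comp (fderiv ℝ g z)) z := h
  rw [h2.fderiv]
  rfl

lemma fderiv_conj' (g : H4 → ℂ) (z v : H4) (hg : DifferentiableAt ℝ g z) :
    fderiv ℝ (fun w => (starRingEnd ℂ) (g w)) z v = (starRingEnd ℂ) (fderiv ℝ g z v) := by
  have h := (Complex.conjCLE : ℂ →L[ℝ] ℂ).hasFDerivAt.comp z hg.hasFDerivAt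
  have h2 : HasFDerivAt (fun w => (starRingEnd ℂ) (g w))
    ((Complex.conjCLE : ℂ →L[ℝ] ℂ).comp (fderiv ℝ g z)) z := h
  rw [h2.fderiv]
  rfl

lemma toH_add_eq_zero (θ : ℝ) (a b : ℂ) (h : toH a + e2 θ * toH b = 0) : a = 0 ∧ b = 0 := by
  have h0 := congrArg (fun q : H4 => q.re) h
  have h1 := congrArg (fun q : H4 => q.imI) h
  have h2 := congrArg (fun q : H4 => q.imJ) h
  have h3 := congrArg (fun q : H4 => q.imK) h
  simp at h0 h1 h2 h3
  have hs := Real.sin_sq_add_cos_sq θ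
  refine ⟨Complex.ext h0 h1, Complex.ext ?_ ?_⟩
  · simp only [Complex.zero_re]
    linear_combination (-b.re) * hs - Real.sin θ * h2 + Real.cos θ * h3
  · simp only [Complex.zero_im]
    linear_combination (-b.im) * hs + Real.cos θ * h2 + Real.sin θ * h3

lemma Dru_toH (θ : ℝ) (α β : ℂ) (g : H4 → ℂ) (z : H4) (hg : DifferentiableAt ℝ g z) :
    Dru θ (toH α + e2 θ * toH β) (fun w => toH (g w)) z
        = toH (db1 g z + α * g z) +
          e2 θ * toH (db2 θ (fun w => (starRingEnd ℂ) (g w)) z + β * (starRingEnd ℂ) (g z)) := by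
  simp only [Dru, Dr, db1, db2, fderiv_toH _ _ _ hg, fderiv_conj' _ _ _ hg]
  generalize fderiv ℝ g z 1 = a
  generalize fderiv ℝ g z qI = b
  generalize fderiv ℝ g z (e2 θ) = c
  generalize fderiv ℝ g z (e3 θ) = d
  generalize g z = w
  ext <;> simp <;> ring

/-- for ℂ-valued g, `{}^θ𝒟_{r,u}[g] = (∂g/∂z̄₁ + αg) + (ie^{iθ}j)(∂ḡ/∂z̄₂ + βḡ)`
with `u = α + (ie^{iθ}j)β`; consequently `{}^θ𝒟_{r,u}[g] = 0` iff `∂g/∂z̄₁ = −αg` and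
`∂g/∂z₂ = −β̄g` on Ω. -/
theorem statement15 (Ω : Set H4) (hΩ : IsOpen Ω) (θ : ℝ) (hθ : θ ∈ Set.Ico 0 (2 * Real.pi))
    (α β : ℂ) (g : H4 → ℂ) (hg : ContDiffOn ℝ 1 g Ω) :
    (∀ z ∈ Ω,
      Dru θ (toH α + e2 θ * toH β) (fun w => toH (g w)) z
        = toH (db1 g z + α * g z) +
          e2 θ * toH (db2 θ (fun w => (starRingEnd ℂ) (g w)) z + β * (starRingEnd ℂ) (g z))) ∧
    ((∀ z ∈ Ω, Dru θ (toH α + e2 θ * toH β) (fun w => toH (g w)) z = 0) ↔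
      (∀ z ∈ Ω, db1 g z = -α * g z ∧ dz2 θ g z = -(starRingEnd ℂ) β * g z)) := by
  have hd : ∀ z ∈ Ω, DifferentiableAt ℝ g z := fun z hz =>
    (hg.contDiffAt (hΩ.mem_nhds hz)).differentiableAt (by norm_num)
  refine ⟨fun z hz => Dru_toH θ α β g z (hd z hz), forall₂_congr fun z hz => ?_⟩
  have key : (starRingEnd ℂ) (dz2 θ g z + (starRingEnd ℂ) β * g z) =
      db2 θ (fun w => (starRingEnd ℂ) (g w)) z + β * (starRingEnd ℂ) (g z) := by
    simp [dz2, db2, fderiv_conj' _ _ _ (hd z hz)]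
  rw [Dru_toH θ α β g z (hd z hz), ← key]
  constructor
  · intro h
    obtain ⟨h1, h2⟩ := toH_add_eq_zero θ _ _ h
    rw [map_eq_zero] at h2
    exact ⟨by linear_combination h1, by linear_combination h2⟩
  · rintro ⟨h1, h2⟩
    rw [h1, h2]
    ext <;> simp

end
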